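/- arXiv:1107.4005 — 5 statements merged into one kernel-verified Lean document; each statement's English description precedes it below -/
import Mathlib

section
/- For every n ≥ 2 and every G ∈ X_n, the integral operator L₀^(n) maps X_n into X_n and satisfies ‖L₀^(n)G‖_{X_n} ≤ (n(n−1)/2)·(c₁+c₂)·‖G‖_{X_n}. -/
open MeasureTheory

noncomputable section

/-- `ℝ^d` -/
abbrev Rd (d : ℕ) : Type := Fin d → ℝ

/-- The diagonal part `L₀⁽ⁿ⁾` of the binary-jump generator, acting on functions on `(ℝ^d)ⁿ`:
`(L₀⁽ⁿ⁾G)(x) = Σ_{i<j} ∫∫ c(xᵢ,xⱼ,y₁,y₂)·[G(x with y₁ at i, y₂ at j) − G(x)] dy₁ dy₂`. -/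
def L0n (d n : ℕ) (c : Rd d → Rd d → Rd d → Rd d → ℝ)
    (G : (Fin n → Rd d) → ℝ) (x : Fin n → Rd d) : ℝ :=
  ∑ i : Fin n, ∑ j : Fin n, if i < j then
    ∫ y : Rd d × Rd d, c (x i) (x j) y.1 y.2 *
      (G (Function.update (Function.update x i y.1) j y.2) - G x)
  else 0

lemma mp_swap3 {A B : Type*} [MeasureSpace A] [MeasureSpace B] [SFinite (volume : Measure A)]
    [SFinite (volume : Measure B)] :
    MeasurePreserving (fun p : (A × B) × A => ((p.2, p.1.2), p.1.1)) := by
  have h1 : MeasurePreserving (MeasurableEquiv.prodAssoc : (A × B) × A ≃ᵐ A × B × A) :=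
    volume_preserving_prodAssoc
  have h2 : MeasurePreserving (Prod.swap : A × (B × A) → (B × A) × A) :=
    Measure.measurePreserving_swap
  have h3 : MeasurePreserving (Prod.map (Prod.swap : B × A → A × B) (id : A → A)) :=
    (Measure.measurePreserving_swap).prod (MeasurePreserving.id _)
  exact h3.comp (h2.comp h1)

lemma mp_swap3' {A B : Type*} [MeasureSpace A] [MeasureSpace B] [SFinite (volume : Measure A)]
    [SFinite (volume : Measure B)] :
    MeasurePreserving (fun p : (B × A) × A => ((p.1.1, p.2), p.1.2)) := by
  have h1 : MeasurePreserving (Prod.map (Prod.swap : B × A → A × B) (id : A → A)) :=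
    (Measure.measurePreserving_swap).prod (MeasurePreserving.id _)
  have h3 : MeasurePreserving (Prod.map (Prod.swap : A × B → B × A) (id : A → A)) :=
    (Measure.measurePreserving_swap).prod (MeasurePreserving.id _)
  exact h3.comp (mp_swap3.comp h1)

lemma mp_one (d n : ℕ) (i : Fin n) :
    MeasurePreserving (fun p : (Fin n → Rd d) × Rd d => (Function.update p.1 i p.2, p.1 i)) := by
  obtain _ | m := n
  · exact i.elim0
  have he := volume_preserving_piFinSuccAbove (fun _ : Fin (m+1) => Rd d) i
  have h1 := he.prod (MeasurePreserving.id (volume : Measure (Rd d)))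
  have h2 := (he.symm _).prod (MeasurePreserving.id (volume : Measure (Rd d)))
  have h := h2.comp ((mp_swap3 (A := Rd d) (B := Fin m → Rd d)).comp h1)
  refine (congrArg (fun f => MeasurePreserving f (volume.prod volume) (volume.prod volume)) ?_).mpr h
  funext p
  refine Prod.ext ?_ ?_
  · funext k
    refine Fin.succAboveCases i ?_ (fun k => ?_) k
    · simp [MeasurableEquiv.piFinSuccAbove, Fin.insertNthEquiv]
    · simp [MeasurableEquiv.piFinSuccAbove, Fin.insertNthEquiv]
  · simp [MeasurableEquiv.piFinSuccAbove, Fin.insertNthEquiv]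

/-- exchange of the coordinates `i`, `j` with the two extra variables -/
def Phi (d n : ℕ) (i j : Fin n) (p : (Fin n → Rd d) × (Rd d × Rd d)) :
    (Fin n → Rd d) × (Rd d × Rd d) :=
  (Function.update (Function.update p.1 i p.2.1) j p.2.2, (p.1 i, p.1 j))

lemma mp_Phi (d n : ℕ) (i j : Fin n) (hij : i ≠ j) : MeasurePreserving (Phi d n i j) := by
  have h1 : MeasurePreserving
      (MeasurableEquiv.prodAssoc : ((Fin n → Rd d) × Rd d) × Rd d ≃ᵐ _) :=
    volume_preserving_prodAssoc
  have hi := (mp_one d n i).prod (MeasurePreserving.id (volume : Measure (Rd d)))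
  have hj := (mp_one d n j).prod (MeasurePreserving.id (volume : Measure (Rd d)))
  have hs := mp_swap3' (A := Rd d) (B := Fin n → Rd d)
  have h := h1.comp (hs.comp (hj.comp (hs.comp (hi.comp (h1.symm _)))))
  convert h using 1
  funext p
  simp [Phi, MeasurableEquiv.prodAssoc, hij.symm, Equiv.prodAssoc]

lemma ae_pair (d n : ℕ) (i j : Fin n) (hij : i ≠ j) {P : Rd d × Rd d → Prop}
    (h : ∀ᵐ x : Rd d × Rd d, P x) : ∀ᵐ x : Fin n → Rd d, P (x i, x j) := by
  have h1 : ∀ᵐ p : (Fin n → Rd d) × (Rd d × Rd d), P p.2 :=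
    Measure.quasiMeasurePreserving_snd.ae h
  have h2 : ∀ᵐ p : (Fin n → Rd d) × (Rd d × Rd d), P (p.1 i, p.1 j) :=
    (mp_Phi d n i j hij).quasiMeasurePreserving.ae h1
  filter_upwards [Measure.ae_ae_of_ae_prod h2] with x hx
  exact hx.exists.choose_spec

lemma key (d n : ℕ) (i j : Fin n) (hij : i ≠ j) (k : (Rd d × Rd d) × (Rd d × Rd d) → ℝ)
    (hk : Measurable k) (hk0 : ∀ p, 0 ≤ k p) (C : ℝ)
    (hint : ∀ᵐ x : Rd d × Rd d, Integrable fun y : Rd d × Rd d => k (x, y))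
    (hC : ∀ᵐ x : Rd d × Rd d, (∫ y : Rd d × Rd d, k (x, y)) ≤ C)
    (G : (Fin n → Rd d) → ℝ) (hG : Integrable G) :
    Integrable (fun p : (Fin n → Rd d) × (Rd d × Rd d) => k ((p.1 i, p.1 j), p.2) * G p.1) ∧
    ∫ p : (Fin n → Rd d) × (Rd d × Rd d), ‖k ((p.1 i, p.1 j), p.2) * G p.1‖ ≤
      C * ∫ x : Fin n → Rd d, |G x| := by
  have hm : Measurable (fun p : (Fin n → Rd d) × (Rd d × Rd d) => k ((p.1 i, p.1 j), p.2)) := by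
    fun_prop
  have hsm : AEStronglyMeasurable (fun p : (Fin n → Rd d) × (Rd d × Rd d) =>
      k ((p.1 i, p.1 j), p.2) * G p.1) volume :=
    hm.aestronglyMeasurable.mul hG.aestronglyMeasurable.comp_fst
  have e : ∀ x : Fin n → Rd d, ∫ y : Rd d × Rd d, ‖k ((x i, x j), y) * G x‖ =
      (∫ y : Rd d × Rd d, k ((x i, x j), y)) * |G x| := by
    intro x
    rw [← integral_mul_const]
    congr 1
    funext y
    rw [norm_mul, Real.norm_of_nonneg (hk0 _), Real.norm_eq_abs]
  have hb : ∀ᵐ x : Fin n → Rd d,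
      ∫ y : Rd d × Rd d, ‖k ((x i, x j), y) * G x‖ ≤ C * |G x| := by
    filter_upwards [ae_pair d n i j hij hC] with x hx
    rw [e]
    gcongr
  have hGi : Integrable (fun x => C * |G x|) := hG.abs.const_mul C
  have hI : Integrable (fun p : (Fin n → Rd d) × (Rd d × Rd d) =>
      k ((p.1 i, p.1 j), p.2) * G p.1) := by
    refine (integrable_prod_iff hsm).2 ⟨?_, ?_⟩
    · filter_upwards [ae_pair d n i j hij hint] with x hx
      exact hx.mul_const _
    · refine hGi.mono' hsm.norm.integral_prod_right' ?_
      filter_upwards [hb] with x hx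
      rw [Real.norm_of_nonneg (integral_nonneg fun _ => norm_nonneg _)]
      exact hx
  refine ⟨hI, ?_⟩
  rw [← integral_const_mul]
  refine (integral_prod _ hI.norm).trans_le ?_
  exact integral_mono_ae hI.norm.integral_prod_left hGi hb

lemma count_pairs (n : ℕ) (B : ℝ) :
    ∑ i : Fin n, ∑ j : Fin n, (if i < j then B else 0) = ((n : ℝ) * ((n : ℝ) - 1) / 2) * B := by
  have h1 : ∑ i : Fin n, ∑ j : Fin n, (if i < j then B else 0) =
      ∑ i : Fin n, ∑ j : Fin n, (if j < i then B else 0) := Finset.sum_comm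
  have h2 : ∑ i : Fin n, ∑ j : Fin n, (if i < j then B else 0) +
      ∑ i : Fin n, ∑ j : Fin n, (if j < i then B else 0) =
      ∑ i : Fin n, ∑ j : Fin n, (B - if i = j then B else 0) := by
    simp only [← Finset.sum_add_distrib]
    refine Finset.sum_congr rfl fun i _ => Finset.sum_congr rfl fun j _ => ?_
    rcases lt_trichotomy i j with h | h | h
    · simp [h, h.not_gt, h.ne]
    · simp [h]
    · simp [h, h.not_gt, h.ne']
  rw [← h1] at h2
  simp [Finset.sum_sub_distrib] at h2
  linarith

/-- Under the essential-sup bounds `c₁, c₂ < ∞`, for every `n ≥ 2` the operator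
`L₀⁽ⁿ⁾` maps `X_n = L¹((ℝ^d)ⁿ)` into itself with
`‖L₀⁽ⁿ⁾G‖_{X_n} ≤ (n(n−1)/2)·(c₁+c₂)·‖G‖_{X_n}`. -/
theorem statement0
    (d : ℕ) (hd : 1 ≤ d)
    (c : Rd d → Rd d → Rd d → Rd d → ℝ)
    (hc_meas : Measurable fun p : (Rd d × Rd d) × Rd d × Rd d => c p.1.1 p.1.2 p.2.1 p.2.2)
    (hc_nonneg : ∀ x₁ x₂ y₁ y₂, 0 ≤ c x₁ x₂ y₁ y₂)
    (c₁ c₂ : ℝ)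
    -- `c₁` is an (finite) essential bound for `(x₁,x₂) ↦ ∫∫ c(x₁,x₂,y₁,y₂) dy₁dy₂`
    (hc₁int : ∀ᵐ x : Rd d × Rd d, Integrable fun y : Rd d × Rd d => c x.1 x.2 y.1 y.2)
    (hc₁ : ∀ᵐ x : Rd d × Rd d, (∫ y : Rd d × Rd d, c x.1 x.2 y.1 y.2) ≤ c₁)
    -- `c₂` is an (finite) essential bound for `(x₁,x₂) ↦ ∫∫ c(y₁,y₂,x₁,x₂) dy₁dy₂`
    (hc₂int : ∀ᵐ x : Rd d × Rd d, Integrable fun y : Rd d × Rd d => c y.1 y.2 x.1 x.2)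
    (hc₂ : ∀ᵐ x : Rd d × Rd d, (∫ y : Rd d × Rd d, c y.1 y.2 x.1 x.2) ≤ c₂)
    (n : ℕ) (hn : 2 ≤ n)
    (G : (Fin n → Rd d) → ℝ) (hG : Integrable G) :
    Integrable (L0n d n c G) ∧
      ∫ x : Fin n → Rd d, |L0n d n c G x| ≤
        ((n : ℝ) * ((n : ℝ) - 1) / 2) * (c₁ + c₂) * ∫ x : Fin n → Rd d, |G x| := by
  have pair : ∀ i j : Fin n, i < j →
      Integrable (fun x : Fin n → Rd d => ∫ y : Rd d × Rd d, c (x i) (x j) y.1 y.2 *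
        (G (Function.update (Function.update x i y.1) j y.2) - G x)) ∧
      ∫ x : Fin n → Rd d, |∫ y : Rd d × Rd d, c (x i) (x j) y.1 y.2 *
        (G (Function.update (Function.update x i y.1) j y.2) - G x)| ≤
        (c₁ + c₂) * ∫ x : Fin n → Rd d, |G x| := by
    intro i j hij
    obtain ⟨I1, B1⟩ := key d n i j hij.ne (fun p => c p.1.1 p.1.2 p.2.1 p.2.2) hc_meas
      (fun _ => hc_nonneg _ _ _ _) c₁ hc₁int hc₁ G hG
    obtain ⟨I2, B2⟩ := key d n i j hij.ne (fun p => c p.2.1 p.2.2 p.1.1 p.1.2)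
      (hc_meas.comp measurable_swap)
      (fun _ => hc_nonneg _ _ _ _) c₂ hc₂int hc₂ G hG
    have hP := mp_Phi d n i j hij.ne
    have I3 := hP.integrable_comp_of_integrable I2
    have hmap : ∫ p, ‖((fun p : (Fin n → Rd d) × (Rd d × Rd d) =>
        c p.2.1 p.2.2 (p.1 i) (p.1 j) * G p.1) ∘ Phi d n i j) p‖ =
        ∫ p : (Fin n → Rd d) × (Rd d × Rd d), ‖c p.2.1 p.2.2 (p.1 i) (p.1 j) * G p.1‖ := by
      have h := integral_map (μ := volume) hP.measurable.aemeasurable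
        (f := fun p : (Fin n → Rd d) × (Rd d × Rd d) => ‖c p.2.1 p.2.2 (p.1 i) (p.1 j) * G p.1‖)
        (by rw [hP.map_eq]; exact I2.norm.aestronglyMeasurable)
      rw [hP.map_eq] at h
      exact h.symm
    have I4 := I3.sub I1
    have eqn : ∀ p : (Fin n → Rd d) × (Rd d × Rd d), c (p.1 i) (p.1 j) p.2.1 p.2.2 *
        (G (Function.update (Function.update p.1 i p.2.1) j p.2.2) - G p.1) =
        ((fun p : (Fin n → Rd d) × (Rd d × Rd d) =>
        c p.2.1 p.2.2 (p.1 i) (p.1 j) * G p.1) ∘ Phi d n i j) p -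
        c (p.1 i) (p.1 j) p.2.1 p.2.2 * G p.1 := by
      intro p
      simp [Phi, hij.ne, mul_sub]
    have I : Integrable (fun p : (Fin n → Rd d) × (Rd d × Rd d) =>
        c (p.1 i) (p.1 j) p.2.1 p.2.2 *
        (G (Function.update (Function.update p.1 i p.2.1) j p.2.2) - G p.1)) :=
      I4.congr (Filter.Eventually.of_forall fun p => (eqn p).symm)
    refine ⟨I.integral_prod_left, ?_⟩
    calc _ ≤ ∫ x : Fin n → Rd d, ∫ y : Rd d × Rd d, ‖c (x i) (x j) y.1 y.2 *
        (G (Function.update (Function.update x i y.1) j y.2) - G x)‖ :=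
          integral_mono I.integral_prod_left.abs I.norm.integral_prod_left
            fun x => (Real.norm_eq_abs _).symm.trans_le (norm_integral_le_integral_norm _)
      _ = ∫ p : (Fin n → Rd d) × (Rd d × Rd d), ‖c (p.1 i) (p.1 j) p.2.1 p.2.2 *
        (G (Function.update (Function.update p.1 i p.2.1) j p.2.2) - G p.1)‖ :=
          (integral_prod _ I.norm).symm
      _ ≤ ∫ p, (‖((fun p : (Fin n → Rd d) × (Rd d × Rd d) =>
        c p.2.1 p.2.2 (p.1 i) (p.1 j) * G p.1) ∘ Phi d n i j) p‖ +
        ‖c (p.1 i) (p.1 j) p.2.1 p.2.2 * G p.1‖) := by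
          refine integral_mono I.norm (I3.norm.add I1.norm) fun p => ?_
          simp only [eqn p]
          exact norm_sub_le _ _
      _ ≤ _ := by
          rw [integral_add I3.norm I1.norm, hmap]
          linarith
  have term : ∀ i j : Fin n,
      Integrable (fun x : Fin n → Rd d => if i < j then
        ∫ y : Rd d × Rd d, c (x i) (x j) y.1 y.2 *
        (G (Function.update (Function.update x i y.1) j y.2) - G x) else 0) ∧
      ∫ x : Fin n → Rd d, |if i < j then ∫ y : Rd d × Rd d, c (x i) (x j) y.1 y.2 *
        (G (Function.update (Function.update x i y.1) j y.2) - G x) else 0| ≤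
        if i < j then (c₁ + c₂) * ∫ x : Fin n → Rd d, |G x| else 0 := by
    intro i j
    by_cases h : i < j
    · simpa only [h, if_true] using pair i j h
    · simp [h]
  have hI : Integrable (L0n d n c G) := by
    unfold L0n
    exact integrable_finsetSum _ fun i _ => integrable_finsetSum _ fun j _ => (term i j).1
  refine ⟨hI, ?_⟩
  rw [mul_assoc, ← count_pairs]
  refine le_trans ?_ (Finset.sum_le_sum fun i _ => Finset.sum_le_sum fun j _ => (term i j).2)
  have hs : ∀ i : Fin n, _ := fun i =>
    integral_finsetSum Finset.univ (μ := volume) fun j _ => (term i j).1.abs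
  simp_rw [← hs]
  rw [← integral_finsetSum _ fun i _ => integrable_finsetSum _ fun j _ => (term i j).1.abs]
  refine integral_mono hI.abs (integrable_finsetSum _ fun i _ =>
    integrable_finsetSum _ fun j _ => (term i j).1.abs) fun x => ?_
  exact (Finset.abs_sum_le_sum_abs _ _).trans
    (Finset.sum_le_sum fun i _ => Finset.abs_sum_le_sum_abs _ _)
end
end

section
/- Let C > 0, Υ > 0, p₀ ∈ L^∞(ℝ^d) with 0 ≤ p₀ ≤ C a.e., and assume c₁, c₃, c₄ < ∞ and, for a.e. (x,y), ∫∫ c(y,u₁,x,u₂) du₁du₂ ≤ a₁(x,y). Then for all continuous v, w : [0,Υ] → L^∞(ℝ^d) with 0 ≤ v_t ≤ C and 0 ≤ w_t ≤ C a.e. for all t, the map Φ defined by (Φv)_t(x) := exp(−∫₀^t ∫ a₁(x,y) v_s(y) dy ds)·p₀(x) + ∫₀^t exp(−∫_s^t ∫ a₁(x,y) v_τ(y) dy dτ)·(∫∫ c̃(y₁,y₂,x) v_s(y₁) v_s(y₂) dy₁dy₂) ds satisfies the Lipschitz estimate sup_{t∈[0,Υ]} ‖(Φv)_t − (Φw)_t‖_{L^∞}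 ≤ 2C(c₃+c₄)·Υ · sup_{t∈[0,Υ]} ‖v_t − w_t‖_{L^∞}. -/
open MeasureTheory

noncomputable section

/-- `a₁(x,y) := ∫∫ c(x,y,u₁,u₂) du₁du₂`. -/
def a1f (d : ℕ) (c : Rd d → Rd d → Rd d → Rd d → ℝ) (x y : Rd d) : ℝ :=
  ∫ u : Rd d × Rd d, c x y u.1 u.2

/-- `c̃(y₁,y₂,x) := ∫ c(y₁,y₂,x,u) du`. -/
def ctil3 (d : ℕ) (c : Rd d → Rd d → Rd d → Rd d → ℝ) (y₁ y₂ x : Rd d) : ℝ :=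
  ∫ u : Rd d, c y₁ y₂ x u

/-- The fixed-point map `Φ` of the Vlasov equation. -/
def PhiMap (d : ℕ) (c : Rd d → Rd d → Rd d → Rd d → ℝ)
    (p₀ : Lp ℝ ⊤ (volume : Measure (Rd d)))
    (V : ℝ → Lp ℝ ⊤ (volume : Measure (Rd d))) (t : ℝ) (x : Rd d) : ℝ :=
  Real.exp (-(∫ s in (0 : ℝ)..t, ∫ y : Rd d, a1f d c x y * V s y)) * p₀ x +
    ∫ s in (0 : ℝ)..t,
      Real.exp (-(∫ τ in s..t, ∫ y : Rd d, a1f d c x y * V τ y)) *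
        (∫ y : Rd d × Rd d, ctil3 d c y.1 y.2 x * V s y.1 * V s y.2)

theorem core_eq (A B : ℝ → ℝ) (hA : Continuous A) (p t : ℝ) :
    Real.exp (-(∫ s in (0 : ℝ)..t, A s)) * p +
      ∫ s in (0 : ℝ)..t, Real.exp (-(∫ τ in s..t, A τ)) * B s =
    Real.exp (-(∫ s in (0 : ℝ)..t, A s)) *
      (p + ∫ s in (0 : ℝ)..t, Real.exp (∫ τ in (0 : ℝ)..s, A τ) * B s) := by
  have h : ∀ s, Real.exp (-(∫ τ in s..t, A τ)) * B s =
      Real.exp (-(∫ s in (0 : ℝ)..t, A s)) * (Real.exp (∫ τ in (0 : ℝ)..s, A τ) * B s) := by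
    intro s
    rw [← mul_assoc, ← Real.exp_add]
    congr 2
    rw [← intervalIntegral.integral_add_adjacent_intervals (a := 0) (b := s) (c := t)
      (hA.intervalIntegrable _ _) (hA.intervalIntegrable _ _)]
    ring
  simp_rw [h]
  rw [intervalIntegral.integral_const_mul]
  ring

theorem core_deriv (A B : ℝ → ℝ) (hA : Continuous A) (hB : Continuous B) (p t : ℝ) :
    HasDerivAt (fun t => Real.exp (-(∫ s in (0 : ℝ)..t, A s)) *
      (p + ∫ s in (0 : ℝ)..t, Real.exp (∫ τ in (0 : ℝ)..s, A τ) * B s))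
      (B t - A t * (Real.exp (-(∫ s in (0 : ℝ)..t, A s)) *
      (p + ∫ s in (0 : ℝ)..t, Real.exp (∫ τ in (0 : ℝ)..s, A τ) * B s))) t := by
  have ha : ∀ t, HasDerivAt (fun t => ∫ s in (0 : ℝ)..t, A s) (A t) t :=
    fun t => hA.integral_hasStrictDerivAt 0 t |>.hasDerivAt
  have hac : Continuous (fun t => ∫ s in (0 : ℝ)..t, A s) :=
    continuous_iff_continuousAt.2 fun t => (ha t).continuousAt
  have hI : Continuous fun s => Real.exp (∫ τ in (0 : ℝ)..s, A τ) * B s := by fun_prop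
  have hb := (hI.integral_hasStrictDerivAt 0 t).hasDerivAt
  have := ((ha t).neg.exp).mul (hb.const_add p)
  refine this.congr_deriv ?_
  have e : Real.exp (-(∫ s in (0 : ℝ)..t, A s)) * Real.exp (∫ s in (0 : ℝ)..t, A s) = 1 := by
    rw [← Real.exp_add]; simp
  simp only [Pi.neg_apply]
  linear_combination (B t) * e

theorem core_est (A₁ A₂ B₁ B₂ : ℝ → ℝ) (hA₁ : Continuous A₁) (hA₂ : Continuous A₂)
    (hB₁ : Continuous B₁) (hB₂ : Continuous B₂) (C p α β : ℝ) (hp : 0 ≤ p) (hpC : p ≤ C)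
    (hA₁0 : ∀ s, 0 ≤ A₁ s) (hB₂0 : ∀ s, 0 ≤ B₂ s)
    (hBA : ∀ s, B₂ s ≤ C * A₂ s) (hα : ∀ s, |A₁ s - A₂ s| ≤ α) (hβ : ∀ s, |B₁ s - B₂ s| ≤ β)
    (t : ℝ) (ht : 0 ≤ t) :
    |(Real.exp (-(∫ s in (0 : ℝ)..t, A₁ s)) * p +
        ∫ s in (0 : ℝ)..t, Real.exp (-(∫ τ in s..t, A₁ τ)) * B₁ s) -
      (Real.exp (-(∫ s in (0 : ℝ)..t, A₂ s)) * p +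
        ∫ s in (0 : ℝ)..t, Real.exp (-(∫ τ in s..t, A₂ τ)) * B₂ s)| ≤ (C * α + β) * t := by
  rw [core_eq A₁ B₁ hA₁, core_eq A₂ B₂ hA₂]
  have d₁ := core_deriv A₁ B₁ hA₁ hB₁ p
  have d₂ := core_deriv A₂ B₂ hA₂ hB₂ p
  have hφ0 : ∀ s, 0 ≤ s → 0 ≤ Real.exp (-(∫ s in (0 : ℝ)..s, A₂ s)) *
      (p + ∫ s in (0 : ℝ)..s, Real.exp (∫ τ in (0 : ℝ)..s, A₂ τ) * B₂ s) := by
    intro s hs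
    have : 0 ≤ ∫ s in (0 : ℝ)..s, Real.exp (∫ τ in (0 : ℝ)..s, A₂ τ) * B₂ s :=
      intervalIntegral.integral_nonneg hs fun u _ => mul_nonneg (Real.exp_pos _).le (hB₂0 u)
    positivity
  have e0₁ : (fun t => Real.exp (-(∫ s in (0 : ℝ)..t, A₁ s)) *
      (p + ∫ s in (0 : ℝ)..t, Real.exp (∫ τ in (0 : ℝ)..s, A₁ τ) * B₁ s)) 0 = p := by simp
  have e0₂ : (fun t => Real.exp (-(∫ s in (0 : ℝ)..t, A₂ s)) *
      (p + ∫ s in (0 : ℝ)..t, Real.exp (∫ τ in (0 : ℝ)..s, A₂ τ) * B₂ s)) 0 = p := by simp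
  set φ₁ : ℝ → ℝ := fun t => Real.exp (-(∫ s in (0 : ℝ)..t, A₁ s)) *
      (p + ∫ s in (0 : ℝ)..t, Real.exp (∫ τ in (0 : ℝ)..s, A₁ τ) * B₁ s) with hφ₁
  set φ₂ : ℝ → ℝ := fun t => Real.exp (-(∫ s in (0 : ℝ)..t, A₂ s)) *
      (p + ∫ s in (0 : ℝ)..t, Real.exp (∫ τ in (0 : ℝ)..s, A₂ τ) * B₂ s) with hφ₂
  change ∀ t, HasDerivAt φ₁ (B₁ t - A₁ t * φ₁ t) t at d₁
  change ∀ t, HasDerivAt φ₂ (B₂ t - A₂ t * φ₂ t) t at d₂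
  change ∀ s, 0 ≤ s → 0 ≤ φ₂ s at hφ0
  change |φ₁ t - φ₂ t| ≤ _
  clear_value φ₁ φ₂
  have ha₁ : ∀ t, HasDerivAt (fun t => ∫ s in (0 : ℝ)..t, A₁ s) (A₁ t) t :=
    fun t => hA₁.integral_hasStrictDerivAt 0 t |>.hasDerivAt
  have ha₂ : ∀ t, HasDerivAt (fun t => ∫ s in (0 : ℝ)..t, A₂ s) (A₂ t) t :=
    fun t => hA₂.integral_hasStrictDerivAt 0 t |>.hasDerivAt
  have z₁ : (fun t => ∫ s in (0 : ℝ)..t, A₁ s) 0 = 0 := by simp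
  have z₂ : (fun t => ∫ s in (0 : ℝ)..t, A₂ s) 0 = 0 := by simp
  generalize (fun t => ∫ s in (0 : ℝ)..t, A₁ s) = a₁ at ha₁ z₁
  generalize (fun t => ∫ s in (0 : ℝ)..t, A₂ s) = a₂ at ha₂ z₂
  have hφC : ∀ s, 0 ≤ s → φ₂ s ≤ C := by
    intro s hs
    have hm : Monotone fun t => (C - φ₂ t) * Real.exp (a₂ t) := by
      have hd : ∀ t, HasDerivAt (fun t => (C - φ₂ t) * Real.exp (a₂ t))
          ((C * A₂ t - B₂ t) * Real.exp (a₂ t)) t := by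
        intro t
        refine (((d₂ t).const_sub C).mul (ha₂ t).exp).congr_deriv ?_
        ring
      refine monotone_of_deriv_nonneg (fun t => (hd t).differentiableAt) fun t => ?_
      rw [(hd t).deriv]
      exact mul_nonneg (by linarith [hBA t]) (Real.exp_pos _).le
    have h := hm hs
    simp only [z₂, e0₂, Real.exp_zero, mul_one] at h
    have := nonneg_of_mul_nonneg_left ((sub_nonneg.2 hpC).trans h) (Real.exp_pos _)
    linarith
  have hm₁ : Monotone a₁ := monotone_of_deriv_nonneg (fun t => (ha₁ t).differentiableAt)
    fun t => by rw [(ha₁ t).deriv]; exact hA₁0 t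
  have hα0 : 0 ≤ α := (abs_nonneg _).trans (hα 0)
  have hβ0 : 0 ≤ β := (abs_nonneg _).trans (hβ 0)
  have hC : 0 ≤ C := hp.trans hpC
  have hd : ∀ s, HasDerivAt (fun t => (φ₁ t - φ₂ t) * Real.exp (a₁ t))
      ((-(A₁ s - A₂ s) * φ₂ s + (B₁ s - B₂ s)) * Real.exp (a₁ s)) s := by
    intro s
    refine (((d₁ s).sub (d₂ s)).mul (ha₁ s).exp).congr_deriv ?_
    simp only [Pi.sub_apply]
    ring
  have key := norm_image_sub_le_of_norm_deriv_le_segment' (a := 0) (b := t)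
    (C := (C * α + β) * Real.exp (a₁ t))
    (fun s _ => (hd s).hasDerivWithinAt) (fun s hs => by
      rw [Real.norm_eq_abs, abs_mul, abs_of_pos (Real.exp_pos _)]
      gcongr
      · refine (abs_add_le _ _).trans (add_le_add ?_ (hβ s))
        rw [abs_mul, abs_neg, abs_of_nonneg (hφ0 s hs.1), mul_comm]
        exact mul_le_mul (hφC s hs.1) (hα s) (abs_nonneg _) hC
      · exact hm₁ hs.2.le) t ⟨ht, le_rfl⟩
  simp only [e0₁, e0₂, sub_self, zero_mul, sub_zero, Real.norm_eq_abs, abs_mul,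
    abs_of_pos (Real.exp_pos _)] at key
  refine le_of_mul_le_mul_right ?_ (Real.exp_pos (a₁ t))
  linarith

section meas
variable {X : Type*} [MeasurableSpace X] {μ : Measure X} [SFinite μ]

theorem lin_est {k f g : X → ℝ} (hk : Integrable k μ) (hk0 : ∀ x, 0 ≤ k x)
    (hfm : AEStronglyMeasurable f μ) (hgm : AEStronglyMeasurable g μ) {C M : ℝ}
    (hf : ∀ᵐ x ∂μ, 0 ≤ f x ∧ f x ≤ C) (hg : ∀ᵐ x ∂μ, 0 ≤ g x ∧ g x ≤ C)
    (hM : ∀ᵐ x ∂μ, |f x - g x| ≤ M) :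
    |(∫ x, k x * f x ∂μ) - ∫ x, k x * g x ∂μ| ≤ (∫ x, k x ∂μ) * M := by
  have i₁ : Integrable (fun x => k x * f x) μ := hk.mul_bdd (c := C) hfm (by
    filter_upwards [hf] with x hx; rw [Real.norm_eq_abs, abs_of_nonneg hx.1]; exact hx.2)
  have i₂ : Integrable (fun x => k x * g x) μ := hk.mul_bdd (c := C) hgm (by
    filter_upwards [hg] with x hx; rw [Real.norm_eq_abs, abs_of_nonneg hx.1]; exact hx.2)
  rw [← integral_sub i₁ i₂, ← integral_mul_const, ← Real.norm_eq_abs]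
  refine norm_integral_le_of_norm_le (hk.mul_const M) ?_
  filter_upwards [hM] with x hx
  rw [← mul_sub, Real.norm_eq_abs, abs_mul, abs_of_nonneg (hk0 x)]
  exact mul_le_mul_of_nonneg_left hx (hk0 x)

theorem bil_est {K : X × X → ℝ} {f g : X → ℝ} (hk : Integrable K (μ.prod μ))
    (hk0 : ∀ x, 0 ≤ K x)
    (hfm : AEStronglyMeasurable f μ) (hgm : AEStronglyMeasurable g μ) {C M : ℝ}
    (hf : ∀ᵐ x ∂μ, 0 ≤ f x ∧ f x ≤ C) (hg : ∀ᵐ x ∂μ, 0 ≤ g x ∧ g x ≤ C)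
    (hM : ∀ᵐ x ∂μ, |f x - g x| ≤ M) :
    |(∫ y, K y * f y.1 * f y.2 ∂(μ.prod μ)) - ∫ y, K y * g y.1 * g y.2 ∂(μ.prod μ)| ≤
      (∫ y, K y ∂(μ.prod μ)) * (2 * C * M) := by
  have q₁ := Measure.quasiMeasurePreserving_fst (μ := μ) (ν := μ)
  have q₂ := Measure.quasiMeasurePreserving_snd (μ := μ) (ν := μ)
  have prodbd : ∀ h : X → ℝ, (∀ᵐ x ∂μ, 0 ≤ h x ∧ h x ≤ C) →
      ∀ᵐ y ∂(μ.prod μ), 0 ≤ h y.1 * h y.2 ∧ h y.1 * h y.2 ≤ C * C := by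
    intro h hh
    filter_upwards [q₁.ae hh, q₂.ae hh] with y h1 h2
    exact ⟨mul_nonneg h1.1 h2.1, mul_le_mul h1.2 h2.2 h2.1 (h1.1.trans h1.2)⟩
  have := lin_est (μ := μ.prod μ) (f := fun y => f y.1 * f y.2) (g := fun y => g y.1 * g y.2)
    (C := C * C) (M := 2 * C * M) hk hk0
    ((hfm.comp_quasiMeasurePreserving q₁).mul (hfm.comp_quasiMeasurePreserving q₂))
    ((hgm.comp_quasiMeasurePreserving q₁).mul (hgm.comp_quasiMeasurePreserving q₂))
    (prodbd f hf) (prodbd g hg) (by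
      filter_upwards [q₁.ae hf, q₂.ae hg, q₁.ae hM, q₂.ae hM] with y h1 h2 h3 h4
      have e : f y.1 * f y.2 - g y.1 * g y.2 =
        f y.1 * (f y.2 - g y.2) + (f y.1 - g y.1) * g y.2 := by ring
      rw [e]
      refine (abs_add_le _ _).trans ?_
      rw [abs_mul, abs_mul, abs_of_nonneg h1.1, abs_of_nonneg h2.1]
      have hC : 0 ≤ C := h1.1.trans h1.2
      have hM0 : 0 ≤ M := (abs_nonneg _).trans h3
      have a := mul_le_mul h1.2 h4 (abs_nonneg _) hC
      have b := mul_le_mul h3 h2.2 h2.1 hM0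
      linarith)
  simpa only [mul_assoc] using this

theorem bil_le {K : X × X → ℝ} {a f : X → ℝ} (hk : Integrable K (μ.prod μ))
    (hk0 : ∀ x, 0 ≤ K x) (ha : Integrable a μ)
    (hKa : ∀ᵐ x ∂μ, ∫ y, K (x, y) ∂μ ≤ a x)
    (hfm : AEStronglyMeasurable f μ) {C : ℝ}
    (hf : ∀ᵐ x ∂μ, 0 ≤ f x ∧ f x ≤ C) :
    (∫ y, K y * f y.1 * f y.2 ∂(μ.prod μ)) ≤ C * ∫ x, a x * f x ∂μ := by
  have q₁ := Measure.quasiMeasurePreserving_fst (μ := μ) (ν := μ)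
  have q₂ := Measure.quasiMeasurePreserving_snd (μ := μ) (ν := μ)
  have hb : ∀ᵐ x ∂μ, ‖f x‖ ≤ C := by
    filter_upwards [hf] with x hx; rw [Real.norm_eq_abs, abs_of_nonneg hx.1]; exact hx.2
  have i₁ : Integrable (fun y : X × X => K y * f y.1) (μ.prod μ) :=
    hk.mul_bdd (hfm.comp_quasiMeasurePreserving q₁) (q₁.ae hb)
  have i₂ : Integrable (fun y : X × X => K y * f y.1 * f y.2) (μ.prod μ) :=
    i₁.mul_bdd (hfm.comp_quasiMeasurePreserving q₂) (q₂.ae hb)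
  have i₃ : Integrable (fun x => a x * f x) μ := ha.mul_bdd hfm hb
  calc (∫ y, K y * f y.1 * f y.2 ∂(μ.prod μ))
      ≤ ∫ y, K y * f y.1 * C ∂(μ.prod μ) := by
        refine integral_mono_ae i₂ (i₁.mul_const C) ?_
        filter_upwards [q₁.ae hf, q₂.ae hf] with y h1 h2
        exact mul_le_mul_of_nonneg_left h2.2 (mul_nonneg (hk0 y) h1.1)
    _ = C * ∫ x, (∫ y, K (x, y) ∂μ) * f x ∂μ := by
        rw [integral_mul_const, mul_comm, integral_prod _ i₁]
        simp only [integral_mul_const]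
    _ ≤ C * ∫ x, a x * f x ∂μ := by
        rcases eq_or_ne μ 0 with h0 | h0
        · simp [h0]
        have : (ae μ).NeBot := ae_neBot.2 h0
        obtain ⟨x, hx⟩ := hf.exists
        refine mul_le_mul_of_nonneg_left ?_ (hx.1.trans hx.2)
        refine integral_mono_ae (hk.integral_prod_left.mul_bdd hfm hb) i₃ ?_
        filter_upwards [hKa, hf] with x h1 h2
        exact mul_le_mul_of_nonneg_right h1 h2.1

theorem lp_sub_le (f g : Lp ℝ ⊤ μ) : ∀ᵐ x ∂μ, |f x - g x| ≤ ‖f - g‖ := by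
  have h := ae_le_eLpNormEssSup (f := (f - g : Lp ℝ ⊤ μ)) (μ := μ)
  filter_upwards [h, Lp.coeFn_sub f g] with x hx hs
  have hfin : eLpNormEssSup (f - g : Lp ℝ ⊤ μ) μ ≠ ⊤ := by
    have := Lp.eLpNorm_ne_top (f - g)
    rwa [eLpNorm_exponent_top] at this
  rw [Lp.norm_def, eLpNorm_exponent_top]
  have h2 := ENNReal.toReal_mono hfin hx
  rw [toReal_enorm, hs] at h2
  simpa using h2

theorem cont_of_lip {E : Type*} [NormedAddCommGroup E] {U : ℝ → E} (hU : Continuous U)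
    {G : ℝ → ℝ} {L : ℝ} (h : ∀ s r, |G s - G r| ≤ L * ‖U s - U r‖) : Continuous G := by
  rw [continuous_iff_continuousAt]
  intro r
  rw [ContinuousAt, tendsto_iff_dist_tendsto_zero]
  refine squeeze_zero (fun _ => dist_nonneg) (fun s => h s r) ?_
  have : Continuous fun s => L * ‖U s - U r‖ := by fun_prop
  simpa using this.tendsto r

end meas

/-- Lipschitz estimate for `Φ` on curves with values in `[0,C]` on a
time interval `[0,Υ]`:
`sup_{t∈[0,Υ]} ‖(Φv)_t − (Φw)_t‖_∞ ≤ 2C(c₃+c₄)Υ · sup_{t∈[0,Υ]} ‖v_t − w_t‖_∞`. -/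
theorem statement14
    (d : ℕ) (hd : 1 ≤ d)
    (c : Rd d → Rd d → Rd d → Rd d → ℝ)
    (hc_meas : Measurable fun p : (Rd d × Rd d) × Rd d × Rd d => c p.1.1 p.1.2 p.2.1 p.2.2)
    (hc_nonneg : ∀ x₁ x₂ y₁ y₂, 0 ≤ c x₁ x₂ y₁ y₂)
    (c₁ c₃ c₄ : ℝ)
    (hc₁int : ∀ᵐ x : Rd d × Rd d, Integrable fun y : Rd d × Rd d => c x.1 x.2 y.1 y.2)
    (hc₁ : ∀ᵐ x : Rd d × Rd d, (∫ y : Rd d × Rd d, c x.1 x.2 y.1 y.2) ≤ c₁)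
    (hc₃int : ∀ᵐ x₁ : Rd d,
      Integrable fun q : Rd d × Rd d × Rd d => c x₁ q.1 q.2.1 q.2.2)
    (hc₃ : ∀ᵐ x₁ : Rd d, (∫ q : Rd d × Rd d × Rd d, c x₁ q.1 q.2.1 q.2.2) ≤ c₃)
    (hc₄int : ∀ᵐ x₁ : Rd d,
      Integrable fun q : Rd d × Rd d × Rd d => c q.2.1 q.2.2 x₁ q.1)
    (hc₄ : ∀ᵐ x₁ : Rd d, (∫ q : Rd d × Rd d × Rd d, c q.2.1 q.2.2 x₁ q.1) ≤ c₄)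
    -- `∫∫ c(y,u₁,x,u₂) du₁du₂ ≤ a₁(x,y)` for a.e. `(x,y)`
    (hchr : ∀ᵐ p : Rd d × Rd d,
      (∫ u : Rd d × Rd d, c p.2 u.1 p.1 u.2) ≤ a1f d c p.1 p.2)
    (C : ℝ) (hC : 0 < C)
    (p₀ : Lp ℝ ⊤ (volume : Measure (Rd d)))
    (hp₀ : ∀ᵐ x : Rd d, 0 ≤ p₀ x ∧ p₀ x ≤ C)
    (Υ : ℝ) (hΥ : 0 < Υ)
    (V W : ℝ → Lp ℝ ⊤ (volume : Measure (Rd d)))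
    (hVcont : ContinuousOn V (Set.Icc 0 Υ)) (hWcont : ContinuousOn W (Set.Icc 0 Υ))
    (hV : ∀ t ∈ Set.Icc (0 : ℝ) Υ, ∀ᵐ x : Rd d, 0 ≤ V t x ∧ V t x ≤ C)
    (hW : ∀ t ∈ Set.Icc (0 : ℝ) Υ, ∀ᵐ x : Rd d, 0 ≤ W t x ∧ W t x ≤ C) :
    ∀ M : ℝ, 0 ≤ M →
      (∀ t ∈ Set.Icc (0 : ℝ) Υ, ∀ᵐ x : Rd d, |V t x - W t x| ≤ M) →
      ∀ t ∈ Set.Icc (0 : ℝ) Υ, ∀ᵐ x : Rd d,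
        |PhiMap d c p₀ V t x - PhiMap d c p₀ W t x| ≤ 2 * C * (c₃ + c₄) * Υ * M := by
  intro M hM hVW t ht
  have hchr' := Measure.ae_ae_of_ae_prod hchr
  filter_upwards [hc₃int, hc₃, hc₄int, hc₄, hchr', hp₀] with x i3 l3 i4 l4 hx hp
  -- linear kernel
  have ha0 : ∀ y, 0 ≤ a1f d c x y := fun y => integral_nonneg fun u => hc_nonneg _ _ _ _
  have hai : Integrable (a1f d c x) := Integrable.integral_prod_left i3
  have hal : ∫ y, a1f d c x y ≤ c₃ := by
    have e : ∫ y, a1f d c x y = ∫ q : Rd d × Rd d × Rd d, c x q.1 q.2.1 q.2.2 :=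
      (integral_prod _ i3).symm
    rw [e]; exact l3
  have hal0 : 0 ≤ ∫ y, a1f d c x y := integral_nonneg ha0
  -- bilinear kernel
  have i4s : Integrable fun q : (Rd d × Rd d) × Rd d => c q.1.1 q.1.2 x q.2 :=
    Integrable.swap i4
  set K : Rd d × Rd d → ℝ := fun y => ctil3 d c y.1 y.2 x with hKdef
  have hK0 : ∀ y, 0 ≤ K y := fun y => integral_nonneg fun u => hc_nonneg _ _ _ _
  have hKi : Integrable K (volume.prod volume) := Integrable.integral_prod_left i4s
  have hKl : ∫ y, K y ∂(volume.prod volume) ≤ c₄ := by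
    have e : ∫ y, K y ∂(volume.prod volume) =
        ∫ q : Rd d × Rd d × Rd d, c q.2.1 q.2.2 x q.1 :=
      (integral_prod_symm _ i4).symm
    rw [e]; exact l4
  have hKl0 : 0 ≤ ∫ y, K y ∂(volume.prod volume) := integral_nonneg hK0
  have hKa : ∀ᵐ y : Rd d, ∫ z, K (y, z) ≤ a1f d c x y := by
    have i5 : Integrable (fun q : Rd d × Rd d × Rd d => c q.1 q.2.1 x q.2.2)
        (volume.prod (volume.prod volume)) := by
      rw [← Measure.prodAssoc_prod, integrable_map_equiv]
      exact i4s
    filter_upwards [hx, i5.prod_right_ae] with y h1 h2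
    refine le_trans (le_of_eq ?_) h1
    exact (integral_prod _ h2).symm
  -- extended curves
  let π : ℝ → ℝ := fun s => (Set.projIcc 0 Υ hΥ.le s : ℝ)
  have hπ : ∀ s, π s ∈ Set.Icc (0 : ℝ) Υ := fun s => (Set.projIcc 0 Υ hΥ.le s).2
  have hπeq : ∀ s ∈ Set.Icc (0 : ℝ) Υ, π s = s := fun s hs => by
    simp only [π, Set.projIcc_of_mem hΥ.le hs]
  have hπc : Continuous π := continuous_subtype_val.comp continuous_projIcc
  have hVc : Continuous fun s => V (π s) := hVcont.comp_continuous hπc hπ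
  have hWc : Continuous fun s => W (π s) := hWcont.comp_continuous hπc hπ
  have meas : ∀ f : Lp ℝ ⊤ (volume : Measure (Rd d)), AEStronglyMeasurable f volume :=
    fun f => Lp.aestronglyMeasurable f
  have phi_eq : ∀ U : ℝ → Lp ℝ ⊤ (volume : Measure (Rd d)), PhiMap d c p₀ U t x =
      Real.exp (-(∫ s in (0 : ℝ)..t, ∫ y : Rd d, a1f d c x y * U (π s) y)) * p₀ x +
      ∫ s in (0 : ℝ)..t,
      Real.exp (-(∫ τ in s..t, ∫ y : Rd d, a1f d c x y * U (π τ) y)) *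
        (∫ y, K y * U (π s) y.1 * U (π s) y.2 ∂(volume.prod volume)) := by
    intro U
    have h1 : ∀ s ∈ Set.Icc 0 t, ∫ τ in s..t, ∫ y : Rd d, a1f d c x y * U (π τ) y =
        ∫ τ in s..t, ∫ y : Rd d, a1f d c x y * U τ y := by
      intro s hs
      refine intervalIntegral.integral_congr fun τ hτ => ?_
      rw [Set.uIcc_of_le hs.2] at hτ
      simp only [hπeq τ ⟨hs.1.trans hτ.1, hτ.2.trans ht.2⟩]
    unfold PhiMap
    rw [h1 0 ⟨le_rfl, ht.1⟩]
    congr 1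
    refine intervalIntegral.integral_congr fun s hs => ?_
    rw [Set.uIcc_of_le ht.1] at hs
    simp only [h1 s hs, hπeq s ⟨hs.1, hs.2.trans ht.2⟩]
    rfl
  have contA : ∀ U : ℝ → Lp ℝ ⊤ (volume : Measure (Rd d)), Continuous (fun s => U (π s)) →
      (∀ t ∈ Set.Icc (0 : ℝ) Υ, ∀ᵐ x : Rd d, 0 ≤ U t x ∧ U t x ≤ C) →
      Continuous fun s => ∫ y : Rd d, a1f d c x y * U (π s) y := fun U hUc hU =>
    cont_of_lip hUc fun s r => lin_est hai ha0 (meas _) (meas _) (hU _ (hπ s)) (hU _ (hπ r))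
      (lp_sub_le _ _)
  have contB : ∀ U : ℝ → Lp ℝ ⊤ (volume : Measure (Rd d)), Continuous (fun s => U (π s)) →
      (∀ t ∈ Set.Icc (0 : ℝ) Υ, ∀ᵐ x : Rd d, 0 ≤ U t x ∧ U t x ≤ C) →
      Continuous fun s => ∫ y, K y * U (π s) y.1 * U (π s) y.2 ∂(volume.prod volume) :=
    fun U hUc hU =>
    cont_of_lip (L := (∫ y, K y ∂(volume.prod volume)) * (2 * C)) hUc fun s r =>
      (bil_est hKi hK0 (meas _) (meas _) (hU _ (hπ s)) (hU _ (hπ r))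
      (lp_sub_le _ _)).trans_eq (by ring)
  rw [phi_eq V, phi_eq W]
  refine (core_est _ _ _ _ (contA V hVc hV) (contA W hWc hW) (contB V hVc hV) (contB W hWc hW)
    C (p₀ x) ((∫ y, a1f d c x y) * M) ((∫ y, K y ∂(volume.prod volume)) * (2 * C * M))
    hp.1 hp.2 ?_ ?_ ?_ ?_ ?_ t ht.1).trans ?_
  · intro s
    refine integral_nonneg_of_ae ?_
    filter_upwards [hV _ (hπ s)] with y hy
    exact mul_nonneg (ha0 y) hy.1
  · intro s
    refine integral_nonneg_of_ae ?_
    filter_upwards [Measure.quasiMeasurePreserving_fst.ae (hW _ (hπ s)),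
      Measure.quasiMeasurePreserving_snd.ae (hW _ (hπ s))] with y h1 h2
    exact mul_nonneg (mul_nonneg (hK0 y) h1.1) h2.1
  · intro s
    exact bil_le hKi hK0 hai hKa (meas _) (hW _ (hπ s))
  · intro s
    exact lin_est hai ha0 (meas _) (meas _) (hV _ (hπ s)) (hW _ (hπ s)) (hVW _ (hπ s))
  · intro s
    exact bil_est hKi hK0 (meas _) (meas _) (hV _ (hπ s)) (hW _ (hπ s)) (hVW _ (hπ s))
  · have hc3 : 0 ≤ c₃ := hal0.trans hal
    have hc4 : 0 ≤ c₄ := hKl0.trans hKl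
    have hCM : 0 ≤ C * M := mul_nonneg hC.le hM
    have b : C * ((∫ y, a1f d c x y) * M) + (∫ y, K y ∂(volume.prod volume)) * (2 * C * M) ≤
        2 * C * (c₃ + c₄) * M := by
      nlinarith [mul_le_mul_of_nonneg_right hal hCM, mul_le_mul_of_nonneg_right hKl hCM,
        mul_nonneg hc3 hCM]
    have b0 : 0 ≤ 2 * C * (c₃ + c₄) * M := by positivity
    calc _ ≤ 2 * C * (c₃ + c₄) * M * Υ := mul_le_mul b ht.2 ht.1 b0
      _ = _ := by ring
end
end

section
/- Suppose p : [0,T] → L^∞(ℝ^d) is such that for a.e. x ∈ ℝ^d the map t ↦ p_t(x) is differentiable on [0,T] with ∂_t p_t(x) = ∫∫ c̃(y₁,y₂,x) p_t(y₁) p_t(y₂) dy₁dy₂ − p_t(x) ∫ a₁(x,y) p_t(y) dy (the Vlasov equation), and sup_t ‖p_t‖_{L^∞} < ∞, c₁, c₃ < ∞. Then for every n ≥ 1, the product functions k_t^(n)(x₁,…,xₙ) := Π_{i=1}^n p_t(x_i) satisfy, for a.e. (x₁,…,xₙ) and all t, the hierarchy equation ∂_t k_t^(n)(x₁,…,xₙ)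 = Σ_{j=1}^n ∫∫ c̃(u₁,u₂,x_j) k_t^(n+1)(u₁,u₂,x₁,…,x̂_j,…,xₙ) du₁du₂ − Σ_{j=1}^n ∫ a₁(x_j,u) k_t^(n+1)(x₁,…,xₙ,u) du, where x̂_j means the j-th argument is omitted. In other words, the Lebesgue–Poisson exponents e_λ(p_t) solve ∂_t k = W⋆k, so the limiting Vlasov dynamics preserves Poisson (chaotic) states. -/
open MeasureTheory

noncomputable section

/-- If `p_t` solves the Vlasov equation
`∂_t p_t(x) = ∫∫ c̃(y₁,y₂,x)p_t(y₁)p_t(y₂) dy₁dy₂ − p_t(x)∫ a₁(x,y)p_t(y) dy`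
(pointwise for a.e. `x`, uniformly bounded), then the Lebesgue–Poisson exponents
`k_t⁽ⁿ⁾(x₁,…,xₙ) = Π p_t(xᵢ)` solve the limiting hierarchy `∂_t k = W⋆k`:
the Vlasov dynamics preserves Poisson (chaotic) states. -/
theorem statement15
    (d : ℕ) (hd : 1 ≤ d)
    (c : Rd d → Rd d → Rd d → Rd d → ℝ)
    (hc_meas : Measurable fun p : (Rd d × Rd d) × Rd d × Rd d => c p.1.1 p.1.2 p.2.1 p.2.2)
    (hc_nonneg : ∀ x₁ x₂ y₁ y₂, 0 ≤ c x₁ x₂ y₁ y₂)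
    (c₁ c₃ : ℝ)
    (hc₁int : ∀ᵐ x : Rd d × Rd d, Integrable fun y : Rd d × Rd d => c x.1 x.2 y.1 y.2)
    (hc₁ : ∀ᵐ x : Rd d × Rd d, (∫ y : Rd d × Rd d, c x.1 x.2 y.1 y.2) ≤ c₁)
    (hc₃int : ∀ᵐ x₁ : Rd d,
      Integrable fun q : Rd d × Rd d × Rd d => c x₁ q.1 q.2.1 q.2.2)
    (hc₃ : ∀ᵐ x₁ : Rd d, (∫ q : Rd d × Rd d × Rd d, c x₁ q.1 q.2.1 q.2.2) ≤ c₃)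
    (T : ℝ) (hT : 0 < T)
    (p : ℝ → Rd d → ℝ)
    (hp_meas : ∀ t : ℝ, AEStronglyMeasurable (p t) volume)
    -- `sup_t ‖p_t‖_∞ < ∞`
    (M : ℝ) (hbd : ∀ t ∈ Set.Icc (0 : ℝ) T, ∀ᵐ x : Rd d, |p t x| ≤ M)
    -- `p` solves the Vlasov equation pointwise, for a.e. `x`, on `[0,T]`
    (hVlasov : ∀ᵐ x : Rd d, ∀ t ∈ Set.Icc (0 : ℝ) T,
      HasDerivWithinAt (fun s : ℝ => p s x)
        ((∫ u : Rd d × Rd d, ctil3 d c u.1 u.2 x * (p t u.1 * p t u.2)) -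
          p t x * ∫ u : Rd d, a1f d c x u * p t u)
        (Set.Icc (0 : ℝ) T) t) :
    ∀ n : ℕ, 1 ≤ n → ∀ᵐ x : Fin n → Rd d, ∀ t ∈ Set.Icc (0 : ℝ) T,
      HasDerivWithinAt (fun s : ℝ => ∏ i : Fin n, p s (x i))
        ((∑ j : Fin n, ∫ u : Rd d × Rd d, ctil3 d c u.1 u.2 (x j) *
            (p t u.1 * p t u.2 * ∏ i ∈ Finset.univ.erase j, p t (x i))) -
          ∑ j : Fin n, ∫ u : Rd d, a1f d c (x j) u *
            ((∏ i : Fin n, p t (x i)) * p t u))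
        (Set.Icc (0 : ℝ) T) t := by
  intro n _
  have hae : ∀ᵐ x : Fin n → Rd d, ∀ j : Fin n, ∀ t ∈ Set.Icc (0 : ℝ) T,
      HasDerivWithinAt (fun s : ℝ => p s (x j))
        ((∫ u : Rd d × Rd d, ctil3 d c u.1 u.2 (x j) * (p t u.1 * p t u.2)) -
          p t (x j) * ∫ u : Rd d, a1f d c (x j) u * p t u)
        (Set.Icc (0 : ℝ) T) t := by
    rw [ae_all_iff]
    intro j
    exact (Measure.quasiMeasurePreserving_eval (fun _ : Fin n => (volume : Measure (Rd d))) j).ae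
      hVlasov
  filter_upwards [hae] with x hx t ht
  have h := HasDerivWithinAt.fun_finsetProd (u := Finset.univ) (fun j _ => hx j t ht)
  refine h.congr_deriv ?_
  rw [← Finset.sum_sub_distrib]
  refine Finset.sum_congr rfl fun j _ => ?_
  have e1 : (∫ u : Rd d × Rd d, ctil3 d c u.1 u.2 (x j) *
            (p t u.1 * p t u.2 * ∏ i ∈ Finset.univ.erase j, p t (x i)))
      = (∫ u : Rd d × Rd d, ctil3 d c u.1 u.2 (x j) * (p t u.1 * p t u.2)) *
          ∏ i ∈ Finset.univ.erase j, p t (x i) := by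
    rw [← integral_mul_const]
    congr 1
    funext u
    ring
  have e2 : (∫ u : Rd d, a1f d c (x j) u * ((∏ i : Fin n, p t (x i)) * p t u))
      = (∏ i : Fin n, p t (x i)) * ∫ u : Rd d, a1f d c (x j) u * p t u := by
    rw [← integral_const_mul]
    congr 1
    funext u
    ring
  rw [e1, e2, ← Finset.mul_prod_erase Finset.univ (fun i => p t (x i)) (Finset.mem_univ j)]
  simp only [smul_eq_mul]
  ring
end
end

section
/- Let α be a type with decidable equality, and let h : Finset α → α → α → ℝ. For F : Finset α → ℝ define (K⁻¹F)(η) := Σ_{ξ ⊆ η} (−1)^{|η∖ξ|} F(ξ). Then for every finite set η ∈ Finset α: K⁻¹( γ ↦ Σ_{{x₁,x₂} ⊆ γ} h(γ∖{x₁,x₂}, x₁, x₂) )(η) = Σ_{{x₁,x₂} ⊆ η} (K⁻¹ h(·, x₁, x₂))(η ∖ {x₁,x₂}), where the sums Σ_{{x₁,x₂}⊆γ} run over all unordered pairs of distinct elements x₁, x₂ of γ, and h is assumed symmetric in its last two arguments (h(ξ,x₁,x₂) = h(ξ,x₂,x₁)). -/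
noncomputable section

/-- The inverse K-transform on finite configurations:
`(K⁻¹F)(η) = Σ_{ξ ⊆ η} (−1)^{|η∖ξ|} F(ξ)`. -/
def Kinv {α : Type*} [DecidableEq α] (F : Finset α → ℝ) (η : Finset α) : ℝ :=
  ∑ ξ ∈ η.powerset, (-1 : ℝ) ^ (η \ ξ).card * F ξ

/-- The sum `Σ_{{x₁,x₂} ⊆ γ} F(x₁,x₂)` over all unordered pairs of distinct elements of
`γ` (for `F` symmetric this equals half the sum over ordered pairs). -/
def pairSum {α : Type*} [DecidableEq α] (F : α → α → ℝ) (γ : Finset α) : ℝ :=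
  (1 / 2 : ℝ) * ∑ x₁ ∈ γ, ∑ x₂ ∈ γ.erase x₁, F x₁ x₂

/-- The combinatorial identity
`K⁻¹(γ ↦ Σ_{{x₁,x₂}⊆γ} h(γ∖{x₁,x₂},x₁,x₂))(η)
 = Σ_{{x₁,x₂}⊆η} (K⁻¹ h(·,x₁,x₂))(η∖{x₁,x₂})`
for every `h` symmetric in its last two arguments. -/
theorem statement16 {α : Type*} [DecidableEq α]
    (h : Finset α → α → α → ℝ)
    (hsym : ∀ ξ : Finset α, ∀ x₁ x₂ : α, h ξ x₁ x₂ = h ξ x₂ x₁)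
    (η : Finset α) :
    Kinv (fun γ => pairSum (fun x₁ x₂ => h (γ \ {x₁, x₂}) x₁ x₂) γ) η =
      pairSum (fun x₁ x₂ => Kinv (fun ξ => h ξ x₁ x₂) (η \ {x₁, x₂})) η := by
  simp only [Kinv, pairSum, Finset.mul_sum]
  rw [Finset.sum_comm' (t' := η) (s' := fun x => η.powerset.filter (fun ξ => x ∈ ξ))
    (by intro x y; simp only [Finset.mem_powerset, Finset.mem_filter]; grind)]
  refine Finset.sum_congr rfl fun x hx => ?_
  rw [Finset.sum_comm' (t' := η.erase x)
    (s' := fun y => η.powerset.filter (fun ξ => x ∈ ξ ∧ y ∈ ξ))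
    (by intro ξ y; simp only [Finset.mem_powerset, Finset.mem_filter, Finset.mem_erase]; grind)]
  refine Finset.sum_congr rfl fun y hy => ?_
  rw [Finset.mem_erase] at hy
  refine Finset.sum_bij' (fun ξ _ => ξ \ {x, y}) (fun ξ _ => ξ ∪ {x, y}) ?_ ?_ ?_ ?_ ?_
  · intro ξ hξ
    simp only [Finset.mem_powerset, Finset.mem_filter] at hξ ⊢
    grind
  · intro ξ hξ
    simp only [Finset.mem_powerset, Finset.mem_filter] at hξ ⊢
    grind
  · intro ξ hξ
    simp only [Finset.mem_powerset, Finset.mem_filter] at hξ ⊢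
    grind
  · intro ξ hξ
    simp only [Finset.mem_powerset] at hξ ⊢
    grind
  · intro ξ hξ
    simp only [Finset.mem_powerset, Finset.mem_filter] at hξ
    have e : (η \ {x, y}) \ (ξ \ {x, y}) = η \ ξ := by grind
    rw [e]
    ring
end
end

section
/- Let α be a type with decidable equality and G : Finset α → ℝ. Define the K-transform (KG)(γ) := Σ_{η ⊆ γ} G(η) (sum over all subsets of the finite set γ). Then for every finite set γ ∈ Finset α, every two distinct elements x₁, x₂ ∈ γ, and every two distinct elements y₁, y₂ ∉ γ: (KG)((γ∖{x₁,x₂}) ∪ {y₁,y₂}) − (KG)(γ) = (K D)(γ∖{x₁,x₂}), where D : Finset α → ℝ is the function D(η) := G(η∪{y₁}) + G(η∪{y₂}) + G(η∪{y₁,y₂}) − G(η∪{x₁}) − G(η∪{x₂}) − G(η∪{x₁,x₂}). -/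
noncomputable section

/-- The K-transform on finite configurations: `(KG)(γ) = Σ_{η ⊆ γ} G(η)`. -/
def Ktr {α : Type*} [DecidableEq α] (G : Finset α → ℝ) (γ : Finset α) : ℝ :=
  ∑ η ∈ γ.powerset, G η

theorem Ktr_two_aux {α : Type*} [DecidableEq α] (G : Finset α → ℝ) (s : Finset α)
    (a b : α) (ha : a ∉ s) (hb : b ∉ s) (hab : a ≠ b) :
    Ktr G (s ∪ {a, b}) =
      ∑ η ∈ s.powerset, (G η + G (η ∪ {a}) + G (η ∪ {b}) + G (η ∪ {a, b})) := by
  have h : s ∪ {a, b} = insert a (insert b s) := by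
    ext z; simp only [Finset.mem_union, Finset.mem_insert, Finset.mem_singleton]; tauto
  have ha' : a ∉ insert b s := by simp [ha, hab]
  unfold Ktr
  rw [h, Finset.sum_powerset_insert ha', Finset.sum_powerset_insert hb,
    Finset.sum_powerset_insert hb, ← Finset.sum_add_distrib, ← Finset.sum_add_distrib,
    ← Finset.sum_add_distrib]
  refine Finset.sum_congr rfl fun η _ => ?_
  have h1 : η ∪ {a} = insert a η := by ext z; simp
  have h2 : η ∪ {b} = insert b η := by ext z; simp
  have h3 : η ∪ {a, b} = insert a (insert b η) := by ext z; simp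
  rw [h1, h2, h3]; ring

/-- For distinct `x₁, x₂ ∈ γ` and distinct `y₁, y₂ ∉ γ`,
`(KG)((γ∖{x₁,x₂}) ∪ {y₁,y₂}) − (KG)(γ) = (KD)(γ∖{x₁,x₂})`, where
`D(η) = G(η∪{y₁}) + G(η∪{y₂}) + G(η∪{y₁,y₂}) − G(η∪{x₁}) − G(η∪{x₂}) − G(η∪{x₁,x₂})`. -/
theorem statement17 {α : Type*} [DecidableEq α]
    (G : Finset α → ℝ) (γ : Finset α)
    (x₁ x₂ : α) (hx₁ : x₁ ∈ γ) (hx₂ : x₂ ∈ γ) (hx : x₁ ≠ x₂)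
    (y₁ y₂ : α) (hy₁ : y₁ ∉ γ) (hy₂ : y₂ ∉ γ) (hy : y₁ ≠ y₂) :
    Ktr G ((γ \ {x₁, x₂}) ∪ {y₁, y₂}) - Ktr G γ =
      Ktr (fun η => G (η ∪ {y₁}) + G (η ∪ {y₂}) + G (η ∪ {y₁, y₂}) -
        G (η ∪ {x₁}) - G (η ∪ {x₂}) - G (η ∪ {x₁, x₂})) (γ \ {x₁, x₂}) := by
  have h : γ = (γ \ {x₁, x₂}) ∪ {x₁, x₂} := by
    rw [Finset.sdiff_union_of_subset]
    intro z hz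
    simp only [Finset.mem_insert, Finset.mem_singleton] at hz
    rcases hz with rfl | rfl <;> assumption
  have e := Ktr_two_aux G (γ \ {x₁, x₂}) x₁ x₂ (by simp) (by simp) hx
  rw [← h] at e
  rw [e, Ktr_two_aux G (γ \ {x₁, x₂}) y₁ y₂ (by simp [hy₁]) (by simp [hy₂]) hy]
  unfold Ktr
  rw [← Finset.sum_sub_distrib]
  refine Finset.sum_congr rfl fun η _ => ?_
  ring
end
end
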